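/- Let q⁰, q¹, …, qᵐ be pairwise mutually singular probability measures on a measurable space X and b ∈ ℝᵐ with Σᵢ e^{−bᵢ} < 1. Then the dual function g(λ) = inf over probability measures p of [KL(q⁰‖p) + Σᵢ λᵢ (KL(qⁱ‖p) − bᵢ)] has a unique maximizer λ* over ℝ₊ᵐ, characterized by λ*ᵢ/(1 + Σⱼ λ*ⱼ) = e^{−bᵢ} for all i = 1, …, m; explicitly, λ*ᵢ = e^{−bᵢ}/(1 − Σⱼ e^{−bⱼ}). (In the paper's notation with thresholds b̄ᵢ = bᵢ + hᵢ, where hᵢ is the differential entropy of qⁱ, this reads λ*ᵢ/(1 + λ*ᵀ𝟏) = e^{hᵢ − b̄ᵢ}.) -/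

import Mathlib

open MeasureTheory

/-- The Kullback–Leibler divergence `KL(μ‖ν)`, with values in `EReal`. -/
noncomputable def KL {X : Type*} [MeasurableSpace X] (μ ν : Measure X) : EReal :=
  open Classical in
  if μ ≪ ν ∧ Integrable (llr μ ν) μ then ((∫ x, llr μ ν x ∂μ : ℝ) : EReal) else ⊤

/-- The dual function `g(λ) = inf over probability measures p of
`KL(q⁰‖p) + ∑ i, λ i * (KL(qⁱ‖p) − b i)`. -/
noncomputable def dualFn {X : Type*} [MeasurableSpace X] {m : ℕ}
    (q0 : Measure X) (qi : Fin m → Measure X) (b : Fin m → ℝ) (l : Fin m → ℝ) : EReal :=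
  ⨅ p : {p : Measure X // IsProbabilityMeasure p},
    KL q0 p.1 + ∑ i, (l i : EReal) * (KL (qi i) p.1 - (b i : EReal))

/-!
Put `q⁰` and the `qⁱ` on the same footing, as one family `Q` with multipliers `c`, where `q⁰` has
multiplier `1`. If `M = ∑ i, cᵢ Qᵢ`, mutual singularity gives `dQᵢ/dM = 1/cᵢ`, whence the
compensation identity `∑ i, cᵢ (KL(Qᵢ‖p) + log cᵢ) = KL(M‖p)`. The right-hand side is minimal when
`p` is the normalization of `M`, so for positive `c` the infimum defining the dual function is
attained there, and this evaluates the dual function at `λ*`.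

Conversely, testing the infimum at `p = ∑ i, vᵢ Qᵢ` bounds the dual function at any multipliers by
`∑ i, cᵢ (-log vᵢ - βᵢ)`, where `β` are the thresholds, with `0` for `q⁰`. For the weights
`v = (1 - ∑ j, e^{-bⱼ}, e^{-b₁}, …, e^{-bₘ})` this bound is the value at `λ*`, whatever `λ` is. If
`λ` attains it, then this `v` minimizes the bound over the open simplex, and the first-order
condition says that `c` is proportional to `v`.
-/

section EReal

variable {ι : Type*}

lemma ereal_coe_sum (s : Finset ι) (f : ι → ℝ) :
    ((∑ i ∈ s, f i : ℝ) : EReal) = ∑ i ∈ s, (f i : EReal) :=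
  map_sum (⟨⟨Real.toEReal, EReal.coe_zero⟩, EReal.coe_add⟩ : ℝ →+ EReal) f s

lemma ereal_sum_eq_top {s : Finset ι} {f : ι → EReal} {i : ι} (hi : i ∈ s) (htop : f i = ⊤)
    (hbot : ∀ j ∈ s, f j ≠ ⊥) : ∑ j ∈ s, f j = ⊤ := by
  classical
  rw [← Finset.add_sum_erase s f hi, htop]
  refine EReal.top_add_of_ne_bot (Finset.sum_induction f (· ≠ ⊥) ?_ EReal.zero_ne_bot ?_)
  · exact fun _ _ hx hy => EReal.add_ne_bot_iff.2 ⟨hx, hy⟩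
  · exact fun j hj => hbot j (Finset.mem_of_mem_erase hj)

end EReal

section OpenSimplex

variable {ι : Type*} [Fintype ι]

/-- The relative interior of the standard simplex: the positive weights with sum `1`. -/
def openSimplex (ι : Type*) [Fintype ι] : Set (ι → ℝ) :=
  {w | (∀ i, 0 < w i) ∧ ∑ i, w i = 1}

lemma div_sum_mem_openSimplex [Nonempty ι] {c : ι → ℝ} (hc : ∀ i, 0 < c i) :
    (fun i => c i / ∑ j, c j) ∈ openSimplex ι := by
  have hC : 0 < ∑ j, c j := Finset.sum_pos (fun i _ => hc i) Finset.univ_nonempty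
  exact ⟨fun i => div_pos (hc i) hC, by rw [← Finset.sum_div, div_self hC.ne']⟩

lemma eventually_add_mul_mem_openSimplex {w d : ι → ℝ} (hw : w ∈ openSimplex ι)
    (hd : ∑ i, d i = 0) : ∀ᶠ t : ℝ in nhds 0, (fun i => w i + t * d i) ∈ openSimplex ι := by
  have hpos : ∀ᶠ t : ℝ in nhds 0, ∀ i, 0 < w i + t * d i := by
    refine Filter.eventually_all.2 fun i => ?_
    have hcont : ContinuousAt (fun t : ℝ => w i + t * d i) 0 := by fun_prop
    exact hcont.eventually_const_lt (by simpa using hw.1 i)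
  filter_upwards [hpos] with t ht
  refine ⟨ht, ?_⟩
  rw [Finset.sum_add_distrib, ← Finset.mul_sum, hd, mul_zero, add_zero, hw.2]

lemma sum_mul_div_eq_zero_of_isMaxOn_sum_mul_log {w c d : ι → ℝ} (hw : w ∈ openSimplex ι)
    (hd : ∑ i, d i = 0)
    (hmax : IsMaxOn (fun v => ∑ i, c i * Real.log (v i)) (openSimplex ι) w) :
    ∑ i, c i * (d i / w i) = 0 := by
  let f : ℝ → ℝ := fun t => ∑ i, c i * Real.log (w i + t * d i)
  have hderiv : HasDerivAt f (∑ i, c i * (d i / w i)) 0 := by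
    refine HasDerivAt.fun_sum fun i _ => HasDerivAt.const_mul (c i) ?_
    have hlin : HasDerivAt (fun t : ℝ => w i + t * d i) (d i) 0 :=
      (hasDerivAt_mul_const (d i)).const_add (w i)
    simpa using hlin.log (by simpa using (hw.1 i).ne')
  have hlocal : IsLocalMax f 0 := by
    filter_upwards [eventually_add_mul_mem_openSimplex hw hd] with t ht
    simpa [f] using hmax ht
  exact hlocal.hasDerivAt_eq_zero hderiv

lemma eq_sum_mul_of_isMaxOn_sum_mul_log {w c : ι → ℝ} (hw : w ∈ openSimplex ι)
    (hmax : IsMaxOn (fun v => ∑ i, c i * Real.log (v i)) (openSimplex ι) w) (i : ι) :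
    c i = (∑ j, c j) * w i := by
  -- The derivative along the tangent direction `d` is `∑ i, dᵢ² / wᵢ`, which forces `d = 0`.
  let d : ι → ℝ := fun i => c i - (∑ j, c j) * w i
  have hd : ∑ i, d i = 0 := by
    rw [Finset.sum_sub_distrib, ← Finset.mul_sum, hw.2, mul_one, sub_self]
  have hsq : ∑ i, d i ^ 2 / w i = 0 := by
    calc ∑ i, d i ^ 2 / w i = ∑ i, (c i * (d i / w i) - (∑ j, c j) * d i) :=
          Finset.sum_congr rfl fun i _ => by
            have := (hw.1 i).ne'
            simp only [d]
            field_simp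
      _ = 0 := by
          rw [Finset.sum_sub_distrib, ← Finset.mul_sum, hd, mul_zero, sub_zero,
            sum_mul_div_eq_zero_of_isMaxOn_sum_mul_log hw hd hmax]
  have hterm : d i ^ 2 / w i = 0 :=
    (Finset.sum_eq_zero_iff_of_nonneg fun j _ => div_nonneg (sq_nonneg _) (hw.1 j).le).1 hsq i
      (Finset.mem_univ i)
  have hdi : d i = 0 := by simpa [(hw.1 i).ne'] using hterm
  exact sub_eq_zero.1 hdi

end OpenSimplex

section LogLikelihoodRatio

variable {X : Type*} [MeasurableSpace X] {μ ν κ : Measure X}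

lemma llr_add_llr_ae_eq [SigmaFinite μ] [SigmaFinite ν] [SigmaFinite κ] (hμν : μ ≪ ν)
    (hνκ : ν ≪ κ) : (fun x => llr μ ν x + llr ν κ x) =ᵐ[μ] llr μ κ := by
  filter_upwards [(hμν.trans hνκ).ae_le (Measure.rnDeriv_mul_rnDeriv hμν),
    Measure.rnDeriv_pos hμν, hμν.ae_le (Measure.rnDeriv_lt_top μ ν),
    hμν.ae_le (Measure.rnDeriv_pos hνκ), (hμν.trans hνκ).ae_le (Measure.rnDeriv_lt_top ν κ)]
    with x hmul hμν_pos hμν_top hνκ_pos hνκ_top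
  rw [llr, llr, llr, ← hmul, Pi.mul_apply, ENNReal.toReal_mul, Real.log_mul
    (ENNReal.toReal_pos hμν_pos.ne' hμν_top.ne).ne'
    (ENNReal.toReal_pos hνκ_pos.ne' hνκ_top.ne).ne']

lemma llr_smul_self_add_ae_eq [IsFiniteMeasure μ] [IsFiniteMeasure ν] (h : μ ⟂ₘ ν) {c : ℝ}
    (hc : 0 < c) : llr μ (ENNReal.ofReal c • μ + ν) =ᵐ[μ] fun _ => -Real.log c := by
  have hc0 : ENNReal.ofReal c ≠ 0 := (ENNReal.ofReal_pos.2 hc).ne'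
  have : IsFiniteMeasure (ENNReal.ofReal c • μ) := μ.smul_finite ENNReal.ofReal_ne_top
  have hac : μ ≪ ENNReal.ofReal c • μ := Measure.absolutelyContinuous_smul hc0
  have hrn : μ.rnDeriv (ENNReal.ofReal c • μ + ν) =ᵐ[μ] μ.rnDeriv (ENNReal.ofReal c • μ) :=
    hac.ae_le (Measure.rnDeriv_add_right_of_mutuallySingular (h.smul _))
  filter_upwards [hrn, llr_smul_right .rfl _ hc0 ENNReal.ofReal_ne_top, llr_self μ]
    with x hx hsmul hself
  rw [llr, hx, ← llr, hsmul, hself, Pi.zero_apply, ENNReal.toReal_ofReal hc.le, zero_sub]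

end LogLikelihoodRatio

section KullbackLeibler

variable {X : Type*} [MeasurableSpace X] {μ ν : Measure X}

lemma KL_eq_integral_llr (hac : μ ≪ ν) (hint : Integrable (llr μ ν) μ) :
    KL μ ν = ((∫ x, llr μ ν x ∂μ : ℝ) : EReal) :=
  if_pos ⟨hac, hint⟩

lemma KL_ne_top_iff : KL μ ν ≠ ⊤ ↔ μ ≪ ν ∧ Integrable (llr μ ν) μ := by
  by_cases h : μ ≪ ν ∧ Integrable (llr μ ν) μ <;> simp [KL, h]

lemma KL_ne_bot : KL μ ν ≠ ⊥ := by
  by_cases h : μ ≪ ν ∧ Integrable (llr μ ν) μ <;> simp [KL, h]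

lemma measureReal_univ_mul_log_le_KL [IsFiniteMeasure μ] [IsProbabilityMeasure ν] :
    ((μ.real Set.univ * Real.log (μ.real Set.univ) : ℝ) : EReal) ≤ KL μ ν := by
  by_cases htop : KL μ ν = ⊤
  · exact htop ▸ le_top
  obtain ⟨hac, hint⟩ := KL_ne_top_iff.1 htop
  have hle := InformationTheory.mul_log_le_toReal_klDiv hac hint
  rw [InformationTheory.toReal_klDiv hac hint, probReal_univ (μ := ν), div_one] at hle
  rw [KL_eq_integral_llr hac hint, EReal.coe_le_coe_iff]
  linarith

end KullbackLeibler

section Mixture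

variable {X ι : Type*} [MeasurableSpace X] [Fintype ι] {Q : ι → Measure X} {c w : ι → ℝ}

/-- The mixture `∑ i, cᵢ Qᵢ` of the measures `Qᵢ`, of total mass `∑ i, cᵢ` if the `Qᵢ` are
probability measures. A negative weight counts as `0`. -/
noncomputable def mixture (c : ι → ℝ) (Q : ι → Measure X) : Measure X :=
  ∑ i, ENNReal.ofReal (c i) • Q i

instance isFiniteMeasure_mixture [∀ i, IsFiniteMeasure (Q i)] :
    IsFiniteMeasure (mixture c Q) := by
  have (i : ι) : IsFiniteMeasure (ENNReal.ofReal (c i) • Q i) :=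
    (Q i).smul_finite ENNReal.ofReal_ne_top
  rw [mixture, ← Measure.sum_fintype]
  infer_instance

lemma mixture_univ [∀ i, IsProbabilityMeasure (Q i)] (hc : ∀ i, 0 ≤ c i) :
    mixture c Q Set.univ = ENNReal.ofReal (∑ i, c i) := by
  simp only [mixture, Measure.finsetSum_apply, Measure.smul_apply, measure_univ, smul_eq_mul,
    mul_one]
  exact (ENNReal.ofReal_sum_of_nonneg fun i _ => hc i).symm

lemma isProbabilityMeasure_mixture [∀ i, IsProbabilityMeasure (Q i)] (hw : w ∈ openSimplex ι) :
    IsProbabilityMeasure (mixture w Q) :=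
  ⟨by rw [mixture_univ fun i => (hw.1 i).le, hw.2, ENNReal.ofReal_one]⟩

lemma mixture_absolutelyContinuous_iff (hc : ∀ i, 0 < c i) {ν : Measure X} :
    mixture c Q ≪ ν ↔ ∀ i, Q i ≪ ν := by
  refine ⟨fun h i => .trans ?_ h, fun h => ?_⟩
  · rw [mixture, ← Measure.sum_fintype]
    exact Measure.absolutelyContinuous_sum_right i
      (Measure.absolutelyContinuous_smul (ENNReal.ofReal_pos.2 (hc i)).ne')
  · rw [mixture, ← Measure.sum_fintype]
    exact Measure.absolutelyContinuous_sum_left fun i => (h i).smul_left _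

lemma integrable_mixture_iff (hc : ∀ i, 0 < c i) {f : X → ℝ} :
    Integrable f (mixture c Q) ↔ ∀ i, Integrable f (Q i) := by
  simp only [mixture, integrable_finsetSum_measure, Finset.mem_univ, true_imp_iff]
  exact forall_congr' fun i =>
    integrable_smul_measure (ENNReal.ofReal_pos.2 (hc i)).ne' ENNReal.ofReal_ne_top

lemma integral_mixture (hc : ∀ i, 0 ≤ c i) {f : X → ℝ} (hf : ∀ i, Integrable f (Q i)) :
    ∫ x, f x ∂mixture c Q = ∑ i, c i * ∫ x, f x ∂Q i := by
  rw [mixture, integral_finsetSum_measure fun i _ => (hf i).smul_measure ENNReal.ofReal_ne_top]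
  simp only [integral_smul_measure, ENNReal.toReal_ofReal (hc _), smul_eq_mul]

lemma llr_mixture_ae_eq [∀ i, IsFiniteMeasure (Q i)] (hQ : Pairwise fun i j => Q i ⟂ₘ Q j) {i : ι}
    (hci : 0 < c i) : llr (Q i) (mixture c Q) =ᵐ[Q i] fun _ => -Real.log (c i) := by
  classical
  have (j : ι) : IsFiniteMeasure (ENNReal.ofReal (c j) • Q j) :=
    (Q j).smul_finite ENNReal.ofReal_ne_top
  have hsing : Q i ⟂ₘ Measure.sum fun j : {j // j ≠ i} => ENNReal.ofReal (c j) • Q j :=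
    Measure.MutuallySingular.sum_right.2 fun j => ((hQ j.2).smul _).symm
  have hsplit : mixture c Q = ENNReal.ofReal (c i) • Q i +
      Measure.sum fun j : {j // j ≠ i} => ENNReal.ofReal (c j) • Q j := by
    rw [Measure.sum_fintype, mixture]
    exact Fintype.sum_eq_add_sum_subtype_ne _ i
  rw [hsplit]
  exact llr_smul_self_add_ae_eq hsing hci

lemma KL_mixture_right [∀ i, IsProbabilityMeasure (Q i)] (hQ : Pairwise fun i j => Q i ⟂ₘ Q j)
    (hc : ∀ i, 0 < c i) (i : ι) : KL (Q i) (mixture c Q) = ((-Real.log (c i) : ℝ) : EReal) := by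
  have hllr := llr_mixture_ae_eq hQ (hc i)
  rw [KL_eq_integral_llr ((mixture_absolutelyContinuous_iff hc).1 .rfl i)
    ((integrable_congr hllr).2 (integrable_const _)), integral_congr_ae hllr, integral_const,
    probReal_univ, one_smul]

section Compensation

variable {p : Measure X} [SigmaFinite p]

lemma llr_ae_eq_llr_mixture_sub_log [∀ i, IsFiniteMeasure (Q i)]
    (hQ : Pairwise fun i j => Q i ⟂ₘ Q j) (hc : ∀ i, 0 < c i) (hac : mixture c Q ≪ p) (i : ι) :
    llr (Q i) p =ᵐ[Q i] fun x => llr (mixture c Q) p x - Real.log (c i) := by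
  filter_upwards [llr_add_llr_ae_eq ((mixture_absolutelyContinuous_iff hc).1 .rfl i) hac,
    llr_mixture_ae_eq hQ (hc i)] with x hchain hconst
  rw [← hchain, hconst]
  ring

lemma KL_mixture_left_ne_top_iff [∀ i, IsFiniteMeasure (Q i)]
    (hQ : Pairwise fun i j => Q i ⟂ₘ Q j) (hc : ∀ i, 0 < c i) :
    KL (mixture c Q) p ≠ ⊤ ↔ ∀ i, KL (Q i) p ≠ ⊤ := by
  simp only [KL_ne_top_iff, forall_and, ← mixture_absolutelyContinuous_iff hc,
    integrable_mixture_iff hc]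
  refine and_congr_right fun hac => forall_congr' fun i => ?_
  rw [integrable_congr (llr_ae_eq_llr_mixture_sub_log hQ hc hac i)]
  simp only [sub_eq_add_neg, integrable_add_const_iff]

variable [∀ i, IsProbabilityMeasure (Q i)]

lemma KL_eq_integral_llr_mixture_sub_log (hQ : Pairwise fun i j => Q i ⟂ₘ Q j)
    (hc : ∀ i, 0 < c i) (htop : KL (mixture c Q) p ≠ ⊤) (i : ι) :
    KL (Q i) p = ((∫ x, llr (mixture c Q) p x ∂Q i - Real.log (c i) : ℝ) : EReal) := by
  obtain ⟨hac, hint⟩ := KL_ne_top_iff.1 htop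
  obtain ⟨hac_i, hint_i⟩ := KL_ne_top_iff.1 ((KL_mixture_left_ne_top_iff hQ hc).1 htop i)
  rw [KL_eq_integral_llr hac_i hint_i,
    integral_congr_ae (llr_ae_eq_llr_mixture_sub_log hQ hc hac i),
    integral_sub ((integrable_mixture_iff hc).1 hint i) (integrable_const _), integral_const,
    probReal_univ, one_smul]

theorem sum_mul_KL_sub_eq_KL_mixture_add (hQ : Pairwise fun i j => Q i ⟂ₘ Q j)
    (hc : ∀ i, 0 < c i) (β : ι → ℝ) :
    ∑ i, (c i : EReal) * (KL (Q i) p - β i) =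
      KL (mixture c Q) p + ((∑ i, c i * (-Real.log (c i) - β i) : ℝ) : EReal) := by
  by_cases htop : KL (mixture c Q) p = ⊤
  · obtain ⟨i, hi⟩ : ∃ i, KL (Q i) p = ⊤ := by
      simpa using (KL_mixture_left_ne_top_iff hQ hc).not.1 (not_not.2 htop)
    rw [htop, EReal.top_add_coe]
    refine ereal_sum_eq_top (Finset.mem_univ i) ?_ fun j _ => ?_
    · rw [hi, EReal.top_sub_coe, EReal.coe_mul_top_of_pos (hc i)]
    · rcases eq_or_ne (KL (Q j) p) ⊤ with hj | hj
      · rw [hj, EReal.top_sub_coe, EReal.coe_mul_top_of_pos (hc j)]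
        exact top_ne_bot
      · rw [← EReal.coe_toReal hj KL_ne_bot, ← EReal.coe_sub, ← EReal.coe_mul]
        exact EReal.coe_ne_bot _
  · obtain ⟨hac, hint⟩ := KL_ne_top_iff.1 htop
    simp only [KL_eq_integral_llr_mixture_sub_log hQ hc htop, ← EReal.coe_sub, ← EReal.coe_mul,
      ← ereal_coe_sum]
    rw [KL_eq_integral_llr hac hint,
      integral_mixture (fun i => (hc i).le) ((integrable_mixture_iff hc).1 hint), ← EReal.coe_add,
      ← Finset.sum_add_distrib]
    congr 1
    exact Finset.sum_congr rfl fun i _ => by ring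

end Compensation

end Mixture

section LagrangeDual

variable {X ι : Type*} [MeasurableSpace X] [Fintype ι] {Q : ι → Measure X} {c w β : ι → ℝ}

/-- The infimum over probability measures `p` of `∑ i, cᵢ (KL(Qᵢ‖p) - βᵢ)`. It is the dual function
of the constrained problem when the objective is included in the sum, as a term with multiplier
`1` and threshold `0`. -/
noncomputable def lagrangeDual (Q : ι → Measure X) (c β : ι → ℝ) : EReal :=
  ⨅ p : {p : Measure X // IsProbabilityMeasure p}, ∑ i, (c i : EReal) * (KL (Q i) p.1 - β i)

variable [∀ i, IsProbabilityMeasure (Q i)]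

theorem lagrangeDual_le (hQ : Pairwise fun i j => Q i ⟂ₘ Q j) (hw : w ∈ openSimplex ι)
    (c β : ι → ℝ) :
    lagrangeDual Q c β ≤ ((∑ i, c i * (-Real.log (w i) - β i) : ℝ) : EReal) := by
  refine (iInf_le _ ⟨mixture w Q, isProbabilityMeasure_mixture hw⟩).trans_eq ?_
  simp only [KL_mixture_right hQ hw.1, ← EReal.coe_sub, ← EReal.coe_mul, ← ereal_coe_sum]

theorem lagrangeDual_eq [Nonempty ι] (hQ : Pairwise fun i j => Q i ⟂ₘ Q j) (hc : ∀ i, 0 < c i) :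
    lagrangeDual Q c β = ((∑ i, c i * (-Real.log (c i / ∑ j, c j) - β i) : ℝ) : EReal) := by
  refine (lagrangeDual_le hQ (div_sum_mem_openSimplex hc) c β).antisymm (le_iInf fun ⟨p, hp⟩ => ?_)
  have hC : 0 < ∑ j, c j := Finset.sum_pos (fun i _ => hc i) Finset.univ_nonempty
  have hmass : (mixture c Q).real Set.univ = ∑ j, c j := by
    rw [measureReal_def, mixture_univ fun i => (hc i).le, ENNReal.toReal_ofReal hC.le]
  rw [sum_mul_KL_sub_eq_KL_mixture_add hQ hc]
  calc ((∑ i, c i * (-Real.log (c i / ∑ j, c j) - β i) : ℝ) : EReal)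
      = (((∑ j, c j) * Real.log (∑ j, c j) : ℝ) : EReal) +
          ((∑ i, c i * (-Real.log (c i) - β i) : ℝ) : EReal) := by
        rw [← EReal.coe_add, Finset.sum_mul, ← Finset.sum_add_distrib]
        congr 1
        refine Finset.sum_congr rfl fun i _ => ?_
        rw [Real.log_div (hc i).ne' hC.ne']
        ring
    _ ≤ _ := by
        gcongr
        exact hmass ▸ measureReal_univ_mul_log_le_KL

theorem eq_sum_mul_of_le_lagrangeDual (hQ : Pairwise fun i j => Q i ⟂ₘ Q j)
    (hw : w ∈ openSimplex ι)
    (hle : ((∑ i, c i * (-Real.log (w i) - β i) : ℝ) : EReal) ≤ lagrangeDual Q c β) (i : ι) :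
    c i = (∑ j, c j) * w i := by
  refine eq_sum_mul_of_isMaxOn_sum_mul_log hw (fun v hv => ?_) i
  have hwv := EReal.coe_le_coe_iff.1 (hle.trans (lagrangeDual_le hQ hv c β))
  simp only [mul_sub, mul_neg, Finset.sum_sub_distrib, Finset.sum_neg_distrib] at hwv
  rw [Set.mem_ofPred_eq]
  linarith

end LagrangeDual

section OptionFamily

variable {X ι : Type*} [MeasurableSpace X] {q0 : Measure X} {qi : ι → Measure X}

lemma pairwise_mutuallySingular_option_elim (hsing0 : ∀ i, q0 ⟂ₘ qi i)
    (hsing : Pairwise fun i j => qi i ⟂ₘ qi j) :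
    Pairwise fun o o' : Option ι => o.elim q0 qi ⟂ₘ o'.elim q0 qi := by
  rintro (_ | i) (_ | j) hne
  · exact absurd rfl hne
  · exact hsing0 j
  · exact (hsing0 i).symm
  · exact hsing fun hij => hne (congrArg some hij)

instance isProbabilityMeasure_option_elim [IsProbabilityMeasure q0]
    [∀ i, IsProbabilityMeasure (qi i)] (o : Option ι) :
    IsProbabilityMeasure (o.elim q0 qi) := by
  cases o <;> dsimp only [Option.elim] <;> infer_instance

end OptionFamily

section OptimalMultiplier

variable {ι : Type*} [Fintype ι] {b l : ι → ℝ}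

/-- The weights `(1 - ∑ i, e^{-bᵢ}, e^{-b₁}, …, e^{-bₘ})` of the optimal mixture. -/
noncomputable def optimalWeight (b : ι → ℝ) (o : Option ι) : ℝ :=
  o.elim (1 - ∑ i, Real.exp (-b i)) fun i => Real.exp (-b i)

lemma optimalWeight_mem_openSimplex (hb : ∑ i, Real.exp (-b i) < 1) :
    optimalWeight b ∈ openSimplex (Option ι) := by
  refine ⟨?_, by simp [optimalWeight, Fintype.sum_option]⟩
  rintro (_ | i)
  · exact sub_pos.2 hb
  · exact Real.exp_pos _

lemma sum_mul_neg_log_optimalWeight_sub (b l : ι → ℝ) :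
    ∑ o : Option ι, o.elim 1 l * (-Real.log (optimalWeight b o) - o.elim 0 b) =
      -Real.log (1 - ∑ i, Real.exp (-b i)) := by
  simp [Fintype.sum_option, optimalWeight]

/-- The maximizer `e^{-bᵢ} / (1 - ∑ j, e^{-bⱼ})` of the dual function. -/
noncomputable def optimalMultiplier (b : ι → ℝ) (i : ι) : ℝ :=
  Real.exp (-b i) / (1 - ∑ j, Real.exp (-b j))

lemma optimalMultiplier_pos (hb : ∑ i, Real.exp (-b i) < 1) (i : ι) :
    0 < optimalMultiplier b i :=
  div_pos (Real.exp_pos _) (sub_pos.2 hb)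

lemma one_add_sum_optimalMultiplier (hb : ∑ i, Real.exp (-b i) < 1) :
    1 + ∑ i, optimalMultiplier b i = (1 - ∑ i, Real.exp (-b i))⁻¹ := by
  have hW := (sub_pos.2 hb).ne'
  simp only [optimalMultiplier]
  rw [← Finset.sum_div]
  field_simp
  ring

lemma optimalMultiplier_div_one_add_sum (hb : ∑ i, Real.exp (-b i) < 1) (i : ι) :
    optimalMultiplier b i / (1 + ∑ j, optimalMultiplier b j) = Real.exp (-b i) := by
  rw [one_add_sum_optimalMultiplier hb, div_inv_eq_mul, optimalMultiplier,
    div_mul_cancel₀ _ (sub_pos.2 hb).ne']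

lemma eq_optimalMultiplier_of_eq_sum_mul_optimalWeight (hb : ∑ i, Real.exp (-b i) < 1)
    (hl : ∀ o : Option ι, o.elim 1 l = (∑ o', Option.elim o' 1 l) * optimalWeight b o) :
    l = optimalMultiplier b := by
  have hnone : 1 = (∑ o', Option.elim o' 1 l) * (1 - ∑ i, Real.exp (-b i)) := hl none
  ext i
  have hsome : l i = (∑ o', Option.elim o' 1 l) * Real.exp (-b i) := hl (some i)
  rw [optimalMultiplier, eq_div_iff (sub_pos.2 hb).ne', hsome, mul_right_comm, ← hnone, one_mul]

lemma elim_optimalMultiplier_div_sum (hb : ∑ i, Real.exp (-b i) < 1) (o : Option ι) :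
    o.elim 1 (optimalMultiplier b) / ∑ o', Option.elim o' 1 (optimalMultiplier b) =
      optimalWeight b o := by
  rw [Fintype.sum_option]
  cases o with
  | none =>
    simp only [Option.elim_none, Option.elim_some, one_add_sum_optimalMultiplier hb, optimalWeight,
      one_div, inv_inv]
  | some i => exact optimalMultiplier_div_one_add_sum hb i

end OptimalMultiplier

section DualFunction

variable {X : Type*} [MeasurableSpace X] {m : ℕ} {q0 : Measure X} {qi : Fin m → Measure X}
  {b l : Fin m → ℝ}

lemma dualFn_eq_lagrangeDual (q0 : Measure X) (qi : Fin m → Measure X) (b l : Fin m → ℝ) :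
    dualFn q0 qi b l =
      lagrangeDual (fun o : Option (Fin m) => o.elim q0 qi) (·.elim 1 l) (·.elim 0 b) := by
  simp only [dualFn, lagrangeDual, Fintype.sum_option, Option.elim_none, Option.elim_some,
    EReal.coe_one, EReal.coe_zero, sub_zero, one_mul]

variable [IsProbabilityMeasure q0] [∀ i, IsProbabilityMeasure (qi i)]

theorem dualFn_le (hsing0 : ∀ i, q0 ⟂ₘ qi i) (hsing : Pairwise fun i j => qi i ⟂ₘ qi j)
    (hb : ∑ i, Real.exp (-b i) < 1) (l : Fin m → ℝ) :
    dualFn q0 qi b l ≤ ((-Real.log (1 - ∑ i, Real.exp (-b i)) : ℝ) : EReal) := by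
  rw [dualFn_eq_lagrangeDual, ← sum_mul_neg_log_optimalWeight_sub b l]
  exact lagrangeDual_le (pairwise_mutuallySingular_option_elim hsing0 hsing)
    (optimalWeight_mem_openSimplex hb) _ _

theorem dualFn_optimalMultiplier (hsing0 : ∀ i, q0 ⟂ₘ qi i)
    (hsing : Pairwise fun i j => qi i ⟂ₘ qi j) (hb : ∑ i, Real.exp (-b i) < 1) :
    dualFn q0 qi b (optimalMultiplier b) =
      ((-Real.log (1 - ∑ i, Real.exp (-b i)) : ℝ) : EReal) := by
  have hpos (o : Option (Fin m)) : 0 < o.elim 1 (optimalMultiplier b) := by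
    cases o with
    | none => exact one_pos
    | some i => exact optimalMultiplier_pos hb i
  rw [dualFn_eq_lagrangeDual,
    lagrangeDual_eq (pairwise_mutuallySingular_option_elim hsing0 hsing) hpos]
  simp only [elim_optimalMultiplier_div_sum hb, sum_mul_neg_log_optimalWeight_sub]

theorem eq_optimalMultiplier_of_le_dualFn (hsing0 : ∀ i, q0 ⟂ₘ qi i)
    (hsing : Pairwise fun i j => qi i ⟂ₘ qi j) (hb : ∑ i, Real.exp (-b i) < 1)
    (hle : ((-Real.log (1 - ∑ i, Real.exp (-b i)) : ℝ) : EReal) ≤ dualFn q0 qi b l) :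
    l = optimalMultiplier b := by
  rw [dualFn_eq_lagrangeDual, ← sum_mul_neg_log_optimalWeight_sub b l] at hle
  exact eq_optimalMultiplier_of_eq_sum_mul_optimalWeight hb
    (eq_sum_mul_of_le_lagrangeDual (pairwise_mutuallySingular_option_elim hsing0 hsing)
      (optimalWeight_mem_openSimplex hb) hle)

end DualFunction

theorem stmt8_general {X : Type*} [MeasurableSpace X] {m : ℕ}
    (q0 : Measure X) [IsProbabilityMeasure q0]
    (qi : Fin m → Measure X) (hqi : ∀ i, IsProbabilityMeasure (qi i))
    (hsing0 : ∀ i, q0 ⟂ₘ qi i)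
    (hsing : Pairwise fun i j => qi i ⟂ₘ qi j)
    (b : Fin m → ℝ) (hb : ∑ i, Real.exp (-b i) < 1)
    (lstar : Fin m → ℝ)
    (hlstar : ∀ i, lstar i = Real.exp (-b i) / (1 - ∑ j, Real.exp (-b j))) :
    (∀ i, 0 < lstar i) ∧
    (∀ l : Fin m → ℝ, dualFn q0 qi b l ≤ dualFn q0 qi b lstar) ∧
    (∀ l : Fin m → ℝ, dualFn q0 qi b l = dualFn q0 qi b lstar → l = lstar) ∧
    (∀ i, lstar i / (1 + ∑ j, lstar j) = Real.exp (-b i)) := by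
  obtain rfl : lstar = optimalMultiplier b := funext hlstar
  have hmax := dualFn_optimalMultiplier hsing0 hsing hb
  exact ⟨optimalMultiplier_pos hb,
    fun l => hmax ▸ dualFn_le hsing0 hsing hb l,
    fun l hl => eq_optimalMultiplier_of_le_dualFn hsing0 hsing hb (hl.trans hmax).ge,
    optimalMultiplier_div_one_add_sum hb⟩

/-- for pairwise mutually singular probability measures `q⁰, …, qᵐ` and
thresholds `b` with `∑ i, e^{−bᵢ} < 1`, the dual function has a unique maximizer `λ*`
over `ℝ₊ᵐ`, characterized by `λ*ᵢ / (1 + ∑ j λ*ⱼ) = e^{−bᵢ}`, and given explicitly by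
`λ*ᵢ = e^{−bᵢ} / (1 − ∑ j e^{−bⱼ})`. -/
theorem stmt8 {X : Type*} [MeasurableSpace X] {m : ℕ}
    (q0 : Measure X) [IsProbabilityMeasure q0]
    (qi : Fin m → Measure X) (hqi : ∀ i, IsProbabilityMeasure (qi i))
    (hsing0 : ∀ i, q0 ⟂ₘ qi i)
    (hsing : Pairwise fun i j => qi i ⟂ₘ qi j)
    (b : Fin m → ℝ) (hb : ∑ i, Real.exp (-b i) < 1)
    (lstar : Fin m → ℝ)
    (hlstar : ∀ i, lstar i = Real.exp (-b i) / (1 - ∑ j, Real.exp (-b j))) :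
    (∀ i, 0 ≤ lstar i) ∧
    (∀ l : Fin m → ℝ, (∀ i, 0 ≤ l i) → dualFn q0 qi b l ≤ dualFn q0 qi b lstar) ∧
    (∀ l : Fin m → ℝ, (∀ i, 0 ≤ l i) →
      dualFn q0 qi b l = dualFn q0 qi b lstar → l = lstar) ∧
    (∀ i, lstar i / (1 + ∑ j, lstar j) = Real.exp (-b i)) := by
  obtain ⟨hpos, hmax, huniq, hchar⟩ := stmt8_general q0 qi hqi hsing0 hsing b hb lstar hlstar
  exact ⟨fun i => (hpos i).le, fun l _ => hmax l, fun l _ => huniq l, hchar⟩
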